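/- arXiv:1905.03174 — 2 statements merged into one kernel-verified Lean document; each statement's English description precedes it below -/
import Mathlib

section
/- Let H be a real inner product space, B : H → H → ℝ a symmetric bilinear form, and W a finite-dimensional subspace of H with dim W = k such that B(u,u) ≥ 0 for every u ∈ H orthogonal to W. Fix a positive integer N and define Q on the N-fold product H^N by Q(V) = Σ_{i=1}^{N} B(V_i, V_i). Then every finite-dimensional subspace T of H^N on which Q is negative definite (i.e. Q(V) < 0 for every nonzero V ∈ T) satisfies dim T ≤ N·k. -/
/-- Linear-algebraic content of Proposition 1.3 of the paper:
if `B` is a symmetric bilinear form on a real inner product space `H` which is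
nonnegative on the orthogonal complement of a `k`-dimensional subspace `W`, and
`Q (V) = ∑ i, B (V i) (V i)` on `H^N`, then any finite-dimensional subspace of `H^N`
on which `Q` is negative definite has dimension at most `N * k`. -/
theorem stmt_1 {H : Type*} [NormedAddCommGroup H] [InnerProductSpace ℝ H]
    (B : H →ₗ[ℝ] H →ₗ[ℝ] ℝ) (hBsymm : ∀ u v : H, B u v = B v u)
    (W : Submodule ℝ H) [FiniteDimensional ℝ W] (k : ℕ)
    (hk : Module.finrank ℝ W = k)
    (hpos : ∀ u : H, (∀ w ∈ W, (inner ℝ u w : ℝ) = 0) → 0 ≤ B u u)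
    (N : ℕ) (hN : 0 < N)
    (T : Submodule ℝ (Fin N → H)) [FiniteDimensional ℝ T]
    (hT : ∀ V ∈ T, V ≠ 0 → (∑ i : Fin N, B (V i) (V i)) < 0) :
    Module.finrank ℝ T ≤ N * k := by
  let P : T →ₗ[ℝ] (Fin N → W) :=
    (W.orthogonalProjectionOnto.toLinearMap.compLeft (Fin N)).comp T.subtype
  have hP : Function.Injective P := by
    rw [← LinearMap.ker_eq_bot, LinearMap.ker_eq_bot']
    rintro ⟨V, hV⟩ hPV
    by_contra hne
    have hV0 : V ≠ 0 := fun h => hne (Subtype.ext h)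
    refine (hT V hV hV0).not_ge (Finset.sum_nonneg fun i _ => hpos _ fun w hw => ?_)
    have hi : W.orthogonalProjectionOnto (V i) = 0 := congrFun hPV i
    exact Submodule.inner_left_of_mem_orthogonal hw
      (Submodule.orthogonalProjectionOnto_eq_zero_iff.mp hi)
  calc Module.finrank ℝ T ≤ Module.finrank ℝ (Fin N → W) :=
        LinearMap.finrank_le_finrank_of_injective hP
    _ = N * k := by simp [Module.finrank_pi_fintype, hk]
end

section
/- Let H be a real inner product space, B : H → H → ℝ a symmetric bilinear form, W a finite-dimensional subspace of H with dim W = k such that B(u,u) ≥ 0 for every u ∈ H orthogonal to W, and K a linear subspace of H such that every u orthogonal to W with B(u,u) = 0 belongs to K. Fix a positive integer N, let D be a linear subspace of the product H^N, and let Z be a finite-dimensional subspace of D with dim Z = z such that every V ∈ D all of whose components V_i lie in K belongs to Z. Define Q(V) = Σ_{i=1}^{N} B(V_i, V_i). Then every finite-dimensional subspace T of D with Q(V) ≤ 0 for all V ∈ T satisfies dim T ≤ N·k + z. -/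
/-- Linear-algebraic content of Theorem 3.3 of the paper. -/
theorem stmt_2 {H : Type*} [NormedAddCommGroup H] [InnerProductSpace ℝ H]
    (B : H →ₗ[ℝ] H →ₗ[ℝ] ℝ) (hBsymm : ∀ u v : H, B u v = B v u)
    (W : Submodule ℝ H) [FiniteDimensional ℝ W] (k : ℕ)
    (hk : Module.finrank ℝ W = k)
    (hpos : ∀ u : H, (∀ w ∈ W, (inner ℝ u w : ℝ) = 0) → 0 ≤ B u u)
    (K : Submodule ℝ H)
    (hK : ∀ u : H, (∀ w ∈ W, (inner ℝ u w : ℝ) = 0) → B u u = 0 → u ∈ K)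
    (N : ℕ) (hN : 0 < N)
    (D : Submodule ℝ (Fin N → H))
    (Z : Submodule ℝ (Fin N → H)) [FiniteDimensional ℝ Z] (z : ℕ)
    (hz : Module.finrank ℝ Z = z) (hZD : Z ≤ D)
    (hZ : ∀ V ∈ D, (∀ i : Fin N, V i ∈ K) → V ∈ Z)
    (T : Submodule ℝ (Fin N → H)) [FiniteDimensional ℝ T] (hTD : T ≤ D)
    (hT : ∀ V ∈ T, (∑ i : Fin N, B (V i) (V i)) ≤ 0) :
    Module.finrank ℝ T ≤ N * k + z := by
  let f : T →ₗ[ℝ] (Fin N → W) :=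
    (LinearMap.pi fun i => W.orthogonalProjectionOnto.toLinearMap ∘ₗ LinearMap.proj i) ∘ₗ T.subtype
  have hker : (LinearMap.ker f).map T.subtype ≤ Z := by
    rintro _ ⟨V, hV, rfl⟩
    have hperp : ∀ i, ∀ w ∈ W, (inner ℝ ((V : Fin N → H) i) w : ℝ) = 0 := fun i =>
      (Submodule.mem_orthogonal' W _).1
        (Submodule.orthogonalProjectionOnto_eq_zero_iff.1 (congrFun (LinearMap.mem_ker.1 hV) i))
    have hnonneg : ∀ i ∈ Finset.univ, 0 ≤ B ((V : Fin N → H) i) ((V : Fin N → H) i) :=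
      fun i _ => hpos _ (hperp i)
    have hsum := le_antisymm (hT V V.2) (Finset.sum_nonneg hnonneg)
    exact hZ _ (hTD V.2) fun i => hK _ (hperp i)
      ((Finset.sum_eq_zero_iff_of_nonneg hnonneg).1 hsum i (Finset.mem_univ i))
  have hkerdim : Module.finrank ℝ (LinearMap.ker f) ≤ z := by
    rw [← hz, ← Submodule.finrank_map_subtype_eq T (LinearMap.ker f)]
    exact Submodule.finrank_mono hker
  have hrange : Module.finrank ℝ (LinearMap.range f) ≤ N * k := by
    simpa [Module.finrank_pi_fintype, hk] using Submodule.finrank_le (LinearMap.range f)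
  rw [← f.finrank_range_add_finrank_ker]
  exact add_le_add hrange hkerdim
end
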